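/- Let p ≠ q be points of E. Set L(p, q̆) := { χ_{E∖{q}}·φ : φ ∈ L, φ(p) = 0 } and L(q, p̆) := { χ_{E∖{p}}·φ : φ ∈ L, φ(q) = 0 }. Then L(p, q̆) = { the element of ℓ²(E) whose value at x ∉ {p, q} is ((x − p)/(x − q))·h(x) and whose value at p and at q is 0 : h ∈ L(q, p̆) }. -/

import Mathlib

/-!
The substance is a division property of the range `L` of the projection `Π`: if `φ ∈ L` vanishes
at `p ∈ E`, then `φ = (x - p) ψ` for some `ψ ∈ L` (`exists_div_mem`). Given this, the function
`φ + (p - q) ψ = (x - q) ψ` is an element of `L` that vanishes at `q` and agrees with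
`(x - q) / (x - p) * φ` off `{p, q}`; this is one inclusion, and the other one is the same
statement with `p` and `q` exchanged.

For the division property, let `ψ₀ = φ / (x - p)` off `p` and `ψ₀ p = 0`. It is square-summable
because `p` is isolated in `E`. The commutator identity reads
`(x - p) (Π ψ₀ - ψ₀) = A b - B a` with constants `a`, `b`. At `x = p` it gives
`A p * b = B p * a`, so `(a, b) = c (A p, B p)`, and the right-hand side equals
`c (x - p) (Π δ_p)(x)`. Hence `ψ = ψ₀ - c δ_p` satisfies `(x - p) (Π ψ - ψ) = 0`, that is,
`Π ψ - ψ = d δ_p`. If `d ≠ 0`, then `δ_p` is orthogonal to `L`, so `Π δ_p = 0` and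
`A x * B p = A p * B x` for all `x`, contrary to the linear independence of `A` and `B`.
-/

/-- A point of a set without accumulation points is uniformly separated from the rest. -/
lemma exists_separation {E : Set ℝ} (hEacc : ∀ x : ℝ, ¬ AccPt x (Filter.principal E)) (p : ℝ) :
    ∃ ε > 0, ∀ x ∈ E, x ≠ p → ε ≤ |x - p| := by
  have h := hEacc p
  rw [accPt_iff_nhds] at h
  push Not at h
  obtain ⟨U, hU, hUE⟩ := h
  obtain ⟨ε, hε, hb⟩ := Metric.mem_nhds_iff.1 hU
  refine ⟨ε, hε, fun x hx hxp => ?_⟩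
  by_contra! hlt
  exact hxp (hUE x ⟨hb (by simpa [Real.dist_eq] using hlt), hx⟩)

open scoped RealInnerProductSpace in
/-- An element of `L` vanishing at `p` is divisible by `x - p` within `L`. -/
lemma exists_div_mem
    {E : Set ℝ}
    (hEacc : ∀ x : ℝ, ¬ AccPt x (Filter.principal E))
    {L : Submodule ℝ (lp (fun _ : ↥E => ℝ) 2)}
    {Pj : lp (fun _ : ↥E => ℝ) 2 →L[ℝ] lp (fun _ : ↥E => ℝ) 2}
    (hPj : ∀ f, Pj f ∈ L ∧ ∀ h ∈ L, ⟪f - Pj f, h⟫ = 0)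
    {A B : ↥E → ℝ}
    (hAB0 : ∀ x : ↥E, ¬(A x = 0 ∧ B x = 0))
    (hABindep : ∀ α β : ℝ, (∀ x : ↥E, α * A x + β * B x = 0) → α = 0 ∧ β = 0)
    (hker : ∀ x y : ↥E, x ≠ y →
      ⟪Pj (lp.single 2 y (1 : ℝ)), lp.single 2 x (1 : ℝ)⟫
        = (A x * B y - A y * B x) / ((x : ℝ) - (y : ℝ)))
    (hcomm : ∀ ψ : lp (fun _ : ↥E => ℝ) 2,
      ∀ hmul : Memℓp (fun x : ↥E => (x : ℝ) * ψ x) 2,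
        ∀ x : ↥E, (x : ℝ) * (Pj ψ) x
            - (Pj (⟨fun y => (y : ℝ) * ψ y, hmul⟩ : lp (fun _ : ↥E => ℝ) 2)) x
          = A x * ∑' y : ↥E, B y * ψ y - B x * ∑' y : ↥E, A y * ψ y)
    (p : ↥E) {φ : lp (fun _ : ↥E => ℝ) 2} (hφ : φ ∈ L) (hφp : φ p = 0) :
    ∃ ψ ∈ L, ∀ x : ↥E, ((x : ℝ) - p) * ψ x = φ x := by
  have hfix : ∀ f ∈ L, Pj f = f := fun f hf => by
    have h := (hPj f).2 _ (L.sub_mem hf (hPj f).1)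
    exact (sub_eq_zero.1 (inner_self_eq_zero.1 h)).symm
  obtain ⟨ε, hε, hsep⟩ := exists_separation hEacc p
  -- Division by zero makes this function vanish at `p`.
  have hmem : Memℓp (fun x : ↥E => φ x / ((x : ℝ) - p)) 2 := by
    refine Memℓp.mono' (g := fun x => ε⁻¹ * ‖φ x‖)
      ((lp.memℓp φ).norm.const_mul ε⁻¹) fun x => ?_
    by_cases hx : x = p
    · subst hx; simp [hφp]
    · have h1 := hsep x x.2 (fun h => hx (Subtype.ext h))
      rw [norm_div, Real.norm_eq_abs ((x : ℝ) - p), div_eq_inv_mul]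
      rw [norm_mul, norm_norm, norm_inv, Real.norm_of_nonneg hε.le]
      gcongr
  set ψ₀ : lp (fun _ : ↥E => ℝ) 2 := ⟨_, hmem⟩ with hψ₀
  have hψ₀x : ∀ x : ↥E, ((x : ℝ) - p) * ψ₀ x = φ x := fun x => by
    change ((x : ℝ) - p) * (φ x / ((x : ℝ) - p)) = φ x
    by_cases hx : x = p
    · subst hx; simp [hφp]
    · exact mul_div_cancel₀ _ (sub_ne_zero.2 fun h => hx (Subtype.ext h))
  have hxeq : (fun x : ↥E => (x : ℝ) * ψ₀ x) = ⇑(φ + (p : ℝ) • ψ₀) := by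
    funext x
    have := hψ₀x x
    simp only [lp.coeFn_add, lp.coeFn_smul, Pi.add_apply, Pi.smul_apply, smul_eq_mul]
    linarith
  have hmul : Memℓp (fun x : ↥E => (x : ℝ) * ψ₀ x) 2 := by
    rw [hxeq]; exact lp.memℓp _
  have hc := hcomm ψ₀ hmul
  have hsub : (⟨fun y => (y : ℝ) * ψ₀ y, hmul⟩ : lp (fun _ : ↥E => ℝ) 2)
      = φ + (p : ℝ) • ψ₀ := Subtype.ext hxeq
  rw [hsub, map_add, map_smul, hfix φ hφ] at hc
  generalize (∑' y : ↥E, B y * ψ₀ y) = b at hc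
  generalize (∑' y : ↥E, A y * ψ₀ y) = a at hc
  simp only [lp.coeFn_add, lp.coeFn_smul, Pi.add_apply, Pi.smul_apply, smul_eq_mul] at hc
  have hab : A p * b = B p * a := by
    have := hc p
    rw [hφp] at this
    linarith
  obtain ⟨c, hca, hcb⟩ : ∃ c, a = c * A p ∧ b = c * B p := by
    by_cases hA : A p = 0
    · have hB : B p ≠ 0 := fun h => hAB0 p ⟨hA, h⟩
      refine ⟨b / B p, ?_, by field_simp⟩
      have : B p * a = 0 := by rw [← hab, hA, zero_mul]
      simp [hA, (mul_eq_zero.1 this).resolve_left hB]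
    · exact ⟨a / A p, by field_simp, by field_simp; linarith⟩
  set δ : lp (fun _ : ↥E => ℝ) 2 := lp.single 2 p (1 : ℝ) with hδ
  have hδx : ∀ x : ↥E, ((x : ℝ) - p) * δ x = 0 := fun x => by
    by_cases hx : x = p
    · subst hx; simp
    · simp [hδ, hx]
  have hδp : δ p = 1 := by simp [hδ]
  have hPδ : ∀ x : ↥E, ((x : ℝ) - p) * Pj δ x = A x * B p - A p * B x := fun x => by
    by_cases hx : x = p
    · subst hx; ring
    · have h := hker x p hx
      rw [lp.inner_single_right] at h
      have hne : (x : ℝ) - p ≠ 0 := sub_ne_zero.2 fun h => hx (Subtype.ext h)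
      rw [eq_div_iff hne] at h
      simp only [RCLike.inner_apply, conj_trivial, one_mul] at h
      linarith
  set ψ := ψ₀ - c • δ with hψ
  have hψx : ∀ x : ↥E, ((x : ℝ) - p) * ψ x = φ x := fun x => by
    simp only [hψ, lp.coeFn_sub, lp.coeFn_smul, Pi.sub_apply, Pi.smul_apply, smul_eq_mul]
    linear_combination hψ₀x x - c * hδx x
  have hdiff : ∀ x : ↥E, ((x : ℝ) - p) * (ψ - Pj ψ) x = 0 := fun x => by
    simp only [hψ, map_sub, map_smul, lp.coeFn_sub, lp.coeFn_smul, Pi.sub_apply, Pi.smul_apply,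
      smul_eq_mul]
    have h := hc x
    rw [hca, hcb] at h
    linear_combination hψ₀x x - c * hδx x - h + c * hPδ x
  have hd : ψ - Pj ψ = (ψ - Pj ψ) p • δ := by
    refine lp.ext (funext fun x => ?_)
    rw [lp.coeFn_smul, Pi.smul_apply, smul_eq_mul]
    by_cases hx : x = p
    · rw [hx, hδp, mul_one]
    · have hne : (x : ℝ) - p ≠ 0 := sub_ne_zero.2 fun h => hx (Subtype.ext h)
      rw [(mul_eq_zero.1 (hdiff x)).resolve_left hne, (mul_eq_zero.1 (hδx x)).resolve_left hne,
        mul_zero]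
  have hd0 : (ψ - Pj ψ) p = 0 := by
    by_contra hne
    have horth : ∀ h ∈ L, ⟪δ, h⟫ = 0 := fun h hh => by
      have h1 := (hPj ψ).2 h hh
      rw [hd, real_inner_smul_left] at h1
      exact (mul_eq_zero.1 h1).resolve_left hne
    have hPδ0 : Pj δ = 0 := by
      have h1 := (hPj δ).2 _ (hPj δ).1
      rw [inner_sub_left, horth _ (hPj δ).1, zero_sub, neg_eq_zero] at h1
      exact inner_self_eq_zero.1 h1
    have h2 := hABindep (B p) (-A p) fun x => by
      have := hPδ x
      rw [hPδ0] at this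
      simp only [lp.coeFn_zero, Pi.zero_apply, mul_zero] at this
      linarith
    exact hAB0 p ⟨neg_eq_zero.1 h2.2, h2.1⟩
  rw [hd0, zero_smul] at hd
  exact ⟨ψ, by rw [sub_eq_zero.1 hd]; exact (hPj ψ).1, hψx⟩

open scoped RealInnerProductSpace in
/-- (Discrete case.) `L(p, q̆) = χ_{E∖{p,q}} ((x-p)/(x-q)) L(q, p̆)`. -/
theorem discrete_palm_subspace_transposition
    (E : Set ℝ) (hEc : E.Countable)
    (hEacc : ∀ x : ℝ, ¬ AccPt x (Filter.principal E))
    (L : Submodule ℝ (lp (fun _ : ↥E => ℝ) 2))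
    (hL : IsClosed (L : Set (lp (fun _ : ↥E => ℝ) 2)))
    (Pj : lp (fun _ : ↥E => ℝ) 2 →L[ℝ] lp (fun _ : ↥E => ℝ) 2)
    (hPj : ∀ f, Pj f ∈ L ∧ ∀ h ∈ L, ⟪f - Pj f, h⟫ = 0)
    (A B : ↥E → ℝ)
    (hAB0 : ∀ x : ↥E, ¬(A x = 0 ∧ B x = 0))
    (hABindep : ∀ α β : ℝ, (∀ x : ↥E, α * A x + β * B x = 0) → α = 0 ∧ β = 0)
    (hker : ∀ x y : ↥E, x ≠ y →
      ⟪Pj (lp.single 2 y (1 : ℝ)), lp.single 2 x (1 : ℝ)⟫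
        = (A x * B y - A y * B x) / ((x : ℝ) - (y : ℝ)))
    (hcomm : ∀ ψ : lp (fun _ : ↥E => ℝ) 2,
      ∀ hmul : Memℓp (fun x : ↥E => (x : ℝ) * ψ x) 2,
        Summable (fun x : ↥E => |A x * ψ x|) ∧ Summable (fun x : ↥E => |B x * ψ x|) ∧
        ∀ x : ↥E, (x : ℝ) * (Pj ψ) x
            - (Pj (⟨fun y => (y : ℝ) * ψ y, hmul⟩ : lp (fun _ : ↥E => ℝ) 2)) x
          = A x * ∑' y : ↥E, B y * ψ y - B x * ∑' y : ↥E, A y * ψ y)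
    (p q : ↥E) (hpq : p ≠ q) :
    {g : lp (fun _ : ↥E => ℝ) 2 | ∃ φ ∈ L, φ p = 0 ∧
        ∀ x : ↥E, g x = if x = q then 0 else φ x}
      = {g : lp (fun _ : ↥E => ℝ) 2 |
          ∃ h ∈ {g' : lp (fun _ : ↥E => ℝ) 2 | ∃ φ ∈ L, φ q = 0 ∧
              ∀ x : ↥E, g' x = if x = p then 0 else φ x},
            g p = 0 ∧ g q = 0 ∧
            ∀ x : ↥E, x ≠ p → x ≠ q →
              g x = (((x : ℝ) - (p : ℝ)) / ((x : ℝ) - (q : ℝ))) * h x} := by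
  have hcomm' := fun ψ hmul => (hcomm ψ hmul).2.2
  have hne : ∀ {x y : ↥E}, x ≠ y → (x : ℝ) - y ≠ 0 := fun h =>
    sub_ne_zero.2 fun h' => h (Subtype.ext h')
  ext g
  simp only [Set.mem_ofPred_eq]
  constructor
  · rintro ⟨φ, hφ, hφp, hg⟩
    obtain ⟨ψ, hψ, hψx⟩ := exists_div_mem hEacc hPj hAB0 hABindep hker hcomm' p hφ hφp
    have hχ : ∀ x : ↥E, (φ + ((p : ℝ) - q) • ψ) x = ((x : ℝ) - q) * ψ x := fun x => by
      simp only [lp.coeFn_add, lp.coeFn_smul, Pi.add_apply, Pi.smul_apply, smul_eq_mul]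
      linear_combination -hψx x
    have hχL := L.add_mem hφ (L.smul_mem ((p : ℝ) - q) hψ)
    generalize φ + ((p : ℝ) - q) • ψ = χ at hχ hχL
    have hh : ∀ x : ↥E, (χ - lp.single 2 p (χ p) : lp (fun _ : ↥E => ℝ) 2) x = if x = p then 0 else χ x := fun x => by
      rw [lp.coeFn_sub, Pi.sub_apply]
      split_ifs with hx
      · subst hx; simp
      · rw [lp.single_apply_ne _ _ _ hx, sub_zero]
    refine ⟨χ - lp.single 2 p (χ p), ⟨χ, hχL, by simp [hχ], hh⟩, by simp [hg, hφp],
      by simp [hg], fun x hxp hxq => ?_⟩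
    rw [hh, hg, if_neg hxp, if_neg hxq, hχ, ← hψx]
    field_simp [hne hxq]
  · rintro ⟨h, ⟨φ, hφ, hφq, hh⟩, hgp, hgq, hg⟩
    obtain ⟨ψ, hψ, hψx⟩ := exists_div_mem hEacc hPj hAB0 hABindep hker hcomm' q hφ hφq
    have hχ : ∀ x : ↥E, (φ + ((q : ℝ) - p) • ψ) x = ((x : ℝ) - p) * ψ x := fun x => by
      simp only [lp.coeFn_add, lp.coeFn_smul, Pi.add_apply, Pi.smul_apply, smul_eq_mul]
      linear_combination -hψx x
    refine ⟨_, L.add_mem hφ (L.smul_mem ((q : ℝ) - p) hψ), by rw [hχ]; simp, fun x => ?_⟩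
    split_ifs with hxq
    · rw [hxq, hgq]
    rw [hχ]
    by_cases hxp : x = p
    · rw [hxp, hgp]; simp
    · rw [hg x hxp hxq, hh, if_neg hxp, ← hψx]
      field_simp [hne hxq]
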